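/- arXiv:2604.10974 — 3 statements merged into one kernel-verified Lean document; each statement's English description precedes it below -/
import Mathlib

section
/- Let X be a nonempty finite set, let p̂ ∈ Δ_X satisfy p̂(x) > 0 for all x, and let V : X → ℝ. Then the map η ↦ D(p_η‖p̂) is differentiable on (0,∞) with derivative η·Var_{p_η}(V) at each η > 0; in particular this derivative is nonnegative, and it equals zero if and only if V is constant on X. -/
/-- Partition function `Z(η) = Σ_x p̂(x) e^{−ηV(x)}`. -/
noncomputable def partitionZ {X : Type*} [Fintype X] (phat V : X → ℝ) (η : ℝ) : ℝ :=
  ∑ x, phat x * Real.exp (-η * V x)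

/-- Exponentially tilted distribution `p_η(x) = p̂(x) e^{−ηV(x)} / Z(η)`. -/
noncomputable def tilted {X : Type*} [Fintype X] (phat V : X → ℝ) (η : ℝ) : X → ℝ :=
  fun x => phat x * Real.exp (-η * V x) / partitionZ phat V η

/-- KL divergence `D(p‖q) = Σ_x p(x) log(p(x)/q(x))`. -/
noncomputable def klDiv {X : Type*} [Fintype X] (p q : X → ℝ) : ℝ :=
  ∑ x, p x * Real.log (p x / q x)

/-- Variance of `f` under `p`: `Var_p(f) = Σ_x p(x) f(x)² − (Σ_x p(x) f(x))²`. -/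
noncomputable def varUnder {X : Type*} [Fintype X] (p f : X → ℝ) : ℝ :=
  (∑ x, p x * f x ^ 2) - (∑ x, p x * f x) ^ 2

/-!
Differentiating `log Z` gives `-E_{p_η}[V]`, and differentiating `E_{p_η}[V]` gives
`-Var_{p_η}(V)`. Since `log (p_η / p̂) = -ηV - log Z`, the divergence is
`-η E_{p_η}[V] - log Z(η)`; in its derivative the two terms `∓E_{p_η}[V]` cancel and only
`η Var_{p_η}(V)` is left. Tilting does not change the support, so this variance vanishes
exactly when `V` is constant on the support of `p̂`.
-/

/-- The mean `Σ_x p(x) f(x)` of `f` under `p`, the first moment entering `varUnder`. The weights `p`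
are arbitrary reals, not assumed to sum to one. -/
noncomputable def meanUnder {X : Type*} [Fintype X] (p f : X → ℝ) : ℝ :=
  ∑ x, p x * f x

section Variance

variable {X : Type*} [Fintype X] {p : X → ℝ}

theorem varUnder_eq_meanUnder_mul_self_sub (f : X → ℝ) :
    varUnder p f = meanUnder p (f * f) - meanUnder p f * meanUnder p f := by
  simp only [varUnder, meanUnder, Pi.mul_apply, pow_two]

theorem varUnder_eq_sum_sq_sub_meanUnder (hp : ∑ x, p x = 1) (f : X → ℝ) :
    varUnder p f = ∑ x, p x * (f x - meanUnder p f) ^ 2 := by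
  set m := meanUnder p f
  have hm : ∑ x, p x * f x = m := rfl
  calc
    varUnder p f = (∑ x, p x * f x ^ 2) - 2 * m * (∑ x, p x * f x) + m ^ 2 * ∑ x, p x := by
      rw [varUnder, hm, hp]
      ring
    _ = ∑ x, p x * (f x - m) ^ 2 := by
      rw [Finset.mul_sum, Finset.mul_sum, ← Finset.sum_sub_distrib, ← Finset.sum_add_distrib]
      exact Finset.sum_congr rfl fun x _ => by ring

theorem varUnder_nonneg (hp₀ : ∀ x, 0 ≤ p x) (hp : ∑ x, p x = 1) (f : X → ℝ) :
    0 ≤ varUnder p f := by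
  rw [varUnder_eq_sum_sq_sub_meanUnder hp]
  exact Finset.sum_nonneg fun x _ => mul_nonneg (hp₀ x) (sq_nonneg _)

theorem varUnder_eq_zero_iff_eq_meanUnder (hp₀ : ∀ x, 0 ≤ p x) (hp : ∑ x, p x = 1) (f : X → ℝ) :
    varUnder p f = 0 ↔ ∀ x, p x ≠ 0 → f x = meanUnder p f := by
  rw [varUnder_eq_sum_sq_sub_meanUnder hp,
    Finset.sum_eq_zero_iff_of_nonneg fun x _ => mul_nonneg (hp₀ x) (sq_nonneg _)]
  simp only [Finset.mem_univ, forall_const, mul_eq_zero, or_iff_not_imp_left,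
    sq_eq_zero_iff, sub_eq_zero, ne_eq]

theorem meanUnder_eq_of_forall_eq {c : ℝ} (hp : ∑ x, p x = 1) {f : X → ℝ}
    (hf : ∀ x, p x ≠ 0 → f x = c) : meanUnder p f = c := by
  have hterm (x : X) : p x * f x = p x * c := by
    by_cases hx : p x = 0
    · rw [hx, zero_mul, zero_mul]
    · rw [hf x hx]
  simp only [meanUnder, hterm, ← Finset.sum_mul, hp, one_mul]

theorem varUnder_eq_zero_iff (hp₀ : ∀ x, 0 ≤ p x) (hp : ∑ x, p x = 1) (f : X → ℝ) :
    varUnder p f = 0 ↔ ∀ x y, p x ≠ 0 → p y ≠ 0 → f x = f y := by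
  rw [varUnder_eq_zero_iff_eq_meanUnder hp₀ hp]
  constructor
  · intro hmean x y hx hy
    rw [hmean x hx, hmean y hy]
  · intro hconst x hx
    exact (meanUnder_eq_of_forall_eq hp fun y hy => hconst y x hy hx).symm

end Variance

section Tilting

variable {X : Type*} [Fintype X] {phat V : X → ℝ} {η : ℝ}

theorem partitionZ_pos (hnonneg : ∀ x, 0 ≤ phat x) (hne : ∃ x, 0 < phat x) (V : X → ℝ) (η : ℝ) :
    0 < partitionZ phat V η := by
  obtain ⟨x, hx⟩ := hne
  exact Finset.sum_pos' (fun y _ => mul_nonneg (hnonneg y) (Real.exp_nonneg _))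
    ⟨x, Finset.mem_univ x, mul_pos hx (Real.exp_pos _)⟩

theorem tilted_nonneg (hnonneg : ∀ x, 0 ≤ phat x) (V : X → ℝ) (η : ℝ) (x : X) :
    0 ≤ tilted phat V η x :=
  have hweight (y : X) : 0 ≤ phat y * Real.exp (-η * V y) :=
    mul_nonneg (hnonneg y) (Real.exp_nonneg _)
  div_nonneg (hweight x) (Finset.sum_nonneg fun y _ => hweight y)

theorem tilted_ne_zero_iff (hZ : partitionZ phat V η ≠ 0) (x : X) :
    tilted phat V η x ≠ 0 ↔ phat x ≠ 0 := by
  simp only [tilted, ne_eq, div_eq_zero_iff, mul_eq_zero, Real.exp_ne_zero, hZ, or_false]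

theorem sum_tilted (hZ : partitionZ phat V η ≠ 0) : ∑ x, tilted phat V η x = 1 := by
  simp only [tilted, ← Finset.sum_div]
  exact div_self hZ

theorem meanUnder_tilted (phat V f : X → ℝ) (η : ℝ) :
    meanUnder (tilted phat V η) f = partitionZ (phat * f) V η / partitionZ phat V η := by
  rw [meanUnder, partitionZ, Finset.sum_div]
  exact Finset.sum_congr rfl fun x _ => by rw [tilted, Pi.mul_apply]; ring

theorem hasDerivAt_partitionZ (phat V : X → ℝ) (η : ℝ) :
    HasDerivAt (partitionZ phat V) (-partitionZ (phat * V) V η) η := by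
  have hexp (x : X) : HasDerivAt (fun t => Real.exp (-t * V x))
      (Real.exp (-η * V x) * (-1 * V x)) η :=
    ((hasDerivAt_neg η).mul_const (V x)).exp
  refine (HasDerivAt.fun_sum fun x _ => (hexp x).const_mul (phat x)).congr_deriv ?_
  rw [partitionZ, ← Finset.sum_neg_distrib]
  exact Finset.sum_congr rfl fun x _ => by rw [Pi.mul_apply]; ring

theorem hasDerivAt_log_partitionZ (hZ : partitionZ phat V η ≠ 0) :
    HasDerivAt (fun t => Real.log (partitionZ phat V t)) (-meanUnder (tilted phat V η) V) η := by
  rw [meanUnder_tilted, ← neg_div]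
  exact (hasDerivAt_partitionZ phat V η).log hZ

theorem hasDerivAt_meanUnder_tilted (hZ : partitionZ phat V η ≠ 0) (f : X → ℝ) :
    HasDerivAt (fun t => meanUnder (tilted phat V t) f)
      (-(meanUnder (tilted phat V η) (f * V) -
        meanUnder (tilted phat V η) f * meanUnder (tilted phat V η) V)) η := by
  simp only [meanUnder_tilted]
  refine ((hasDerivAt_partitionZ (phat * f) V η).fun_div
    (hasDerivAt_partitionZ phat V η) hZ).congr_deriv ?_
  rw [mul_assoc]
  field_simp
  ring

theorem hasDerivAt_meanUnder_tilted_self (hZ : partitionZ phat V η ≠ 0) :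
    HasDerivAt (fun t => meanUnder (tilted phat V t) V) (-varUnder (tilted phat V η) V) η := by
  rw [varUnder_eq_meanUnder_mul_self_sub]
  exact hasDerivAt_meanUnder_tilted hZ V

theorem log_tilted_div (hZ : partitionZ phat V η ≠ 0) {x : X} (hx : phat x ≠ 0) :
    Real.log (tilted phat V η x / phat x) = -η * V x - Real.log (partitionZ phat V η) := by
  rw [tilted, div_right_comm, mul_div_cancel_left₀ _ hx,
    Real.log_div (Real.exp_ne_zero _) hZ, Real.log_exp]

theorem klDiv_tilted (hZ : partitionZ phat V η ≠ 0) :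
    klDiv (tilted phat V η) phat =
      -η * meanUnder (tilted phat V η) V - Real.log (partitionZ phat V η) := by
  have hterm (x : X) : tilted phat V η x * Real.log (tilted phat V η x / phat x) =
      -η * (tilted phat V η x * V x) - tilted phat V η x * Real.log (partitionZ phat V η) := by
    by_cases hx : phat x = 0
    · -- The logarithm is the junk value `log (0 / 0)`, but its weight is zero.
      simp [tilted, hx]
    · rw [log_tilted_div hZ hx]
      ring
  simp only [klDiv, hterm, Finset.sum_sub_distrib, ← Finset.mul_sum, ← Finset.sum_mul,
    sum_tilted hZ, one_mul, meanUnder]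

theorem hasDerivAt_klDiv_tilted (hZ : partitionZ phat V η ≠ 0) :
    HasDerivAt (fun t => klDiv (tilted phat V t) phat) (η * varUnder (tilted phat V η) V) η := by
  have hformula : (fun t => klDiv (tilted phat V t) phat) =ᶠ[nhds η]
      fun t => -t * meanUnder (tilted phat V t) V - Real.log (partitionZ phat V t) :=
    ((hasDerivAt_partitionZ phat V η).continuousAt.eventually_ne hZ).mono
      fun _ => klDiv_tilted
  have hderiv := ((hasDerivAt_neg η).fun_mul (hasDerivAt_meanUnder_tilted_self hZ)).fun_sub
    (hasDerivAt_log_partitionZ hZ)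
  exact (hderiv.congr_of_eventuallyEq hformula).congr_deriv (by ring)

end Tilting

theorem kl_of_tilted_derivative_general {X : Type*} [Fintype X] {phat : X → ℝ}
    (hnonneg : ∀ x, 0 ≤ phat x) (hne : ∃ x, 0 < phat x) (V : X → ℝ) (η : ℝ) :
    HasDerivAt (fun t : ℝ => klDiv (tilted phat V t) phat)
      (η * varUnder (tilted phat V η) V) η ∧
    0 ≤ varUnder (tilted phat V η) V ∧
    (varUnder (tilted phat V η) V = 0 ↔ ∀ x y, phat x ≠ 0 → phat y ≠ 0 → V x = V y) := by
  have hZ := (partitionZ_pos hnonneg hne V η).ne'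
  have hp₀ := tilted_nonneg hnonneg V η
  refine ⟨hasDerivAt_klDiv_tilted hZ, varUnder_nonneg hp₀ (sum_tilted hZ) V, ?_⟩
  simpa only [tilted_ne_zero_iff hZ] using varUnder_eq_zero_iff hp₀ (sum_tilted hZ) V

/-- `η ↦ D(p_η‖p̂)` is differentiable on `(0,∞)` with derivative
`η·Var_{p_η}(V)`; this derivative is nonnegative, and it is zero iff `V` is constant. -/
theorem kl_of_tilted_derivative {X : Type*} [Fintype X] [Nonempty X]
    (phat : X → ℝ) (hpos : ∀ x, 0 < phat x) (hsum : ∑ x, phat x = 1)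
    (V : X → ℝ) :
    ∀ η : ℝ, 0 < η →
      HasDerivAt (fun t : ℝ => klDiv (tilted phat V t) phat)
        (η * varUnder (tilted phat V η) V) η ∧
      0 ≤ η * varUnder (tilted phat V η) V ∧
      (η * varUnder (tilted phat V η) V = 0 ↔ ∀ x y : X, V x = V y) := by
  intro η hη
  obtain ⟨hderiv, hvar, hzero⟩ := kl_of_tilted_derivative_general (fun x => (hpos x).le)
    ⟨Classical.arbitrary X, hpos _⟩ V η
  exact ⟨hderiv, mul_nonneg hη.le hvar, by simpa [hη.ne', (hpos _).ne'] using hzero⟩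
end

section
/- In a finite robust MDP in which each uncertainty set P(s,a) is a nonempty compact subset of Δ_S (viewed as a subset of ℝ^S), the robust optimality operator (T_P V)(s) = max_{a ∈ A} ( r(s,a) + γ inf_{p ∈ P(s,a)} Σ_{s'} p(s') V(s') ) is a γ-contraction in the supremum norm with a unique fixed point V*, and there exists a deterministic stationary policy π* : S → A such that V^{π*}_P = V* and, for every stationary (possibly randomized) policy π and every s ∈ S, V^{π*}_P(s) ≥ V^π_P(s), where V^π_P denotes the unique fixed point of the robust evaluation operator T^π_P. -/
/-- Robust evaluation operator
`(T^π_P V)(s) = Σ_a π(a|s) [ r(s,a) + γ inf_{p ∈ P(s,a)} Σ_{s'} p(s') V(s') ]`. -/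
noncomputable def robustEval {S A : Type*} [Fintype S] [Fintype A]
    (r : S → A → ℝ) (γ : ℝ) (P : S → A → Set (S → ℝ)) (π : S → A → ℝ)
    (V : S → ℝ) : S → ℝ :=
  fun s => ∑ a, π s a *
    (r s a + γ * sInf {v : ℝ | ∃ p ∈ P s a, v = ∑ s', p s' * V s'})

/-- Robust optimality operator
`(T_P V)(s) = max_a ( r(s,a) + γ inf_{p ∈ P(s,a)} Σ_{s'} p(s') V(s') )`. -/
noncomputable def robustOpt {S A : Type*} [Fintype S] [Fintype A] [Nonempty A]
    (r : S → A → ℝ) (γ : ℝ) (P : S → A → Set (S → ℝ)) (V : S → ℝ) : S → ℝ :=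
  fun s => Finset.univ.sup' Finset.univ_nonempty
    (fun a => r s a + γ * sInf {v : ℝ | ∃ p ∈ P s a, v = ∑ s', p s' * V s'})

/-! A monotone self-map `T` of `ℝ^S` with `T (V + c) ≤ T V + γ c` for constants `c ≥ 0` is a
`γ`-contraction for the supremum norm (Blackwell's criterion). The robust optimality operator `T` is
of this kind because worst-case expectations are monotone and commute with adding constants. It
dominates every evaluation operator and agrees at its fixed point `V*` with that of a greedy policy.
The value `V` of any policy therefore satisfies `V ≤ T V`, so the iterates of `T` increase from `V`
to their limit `V*`. -/

open Function Finset
open scoped NNReal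

section FixedPoints

theorem le_contractingWith_fixedPoint {α : Type*} [MetricSpace α] [CompleteSpace α] [Nonempty α]
    [Preorder α] [OrderClosedTopology α] {K : ℝ≥0} {f : α → α} (hf : ContractingWith K f)
    (hmono : Monotone f) {x : α} (hx : x ≤ f x) : x ≤ hf.fixedPoint f :=
  (hmono.monotone_iterate_of_le_map hx).ge_of_tendsto (hf.tendsto_iterate_fixedPoint x) 0

theorem lipschitzWith_of_monotone_of_map_add_const_le {ι κ : Type*} [Fintype ι] [Fintype κ]
    {K : ℝ≥0} {T : (ι → ℝ) → κ → ℝ} (hmono : Monotone T)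
    (hadd : ∀ (V : ι → ℝ) (c : ℝ), 0 ≤ c → T (V + const ι c) ≤ T V + const κ (K * c)) :
    LipschitzWith K T := by
  have hle (V W : ι → ℝ) : T V ≤ T W + const κ (K * dist V W) := by
    have hVW : V ≤ W + const ι (dist V W) := fun i ↦ by
      have := (le_abs_self (V i - W i)).trans (dist_le_pi_dist V W i)
      simpa only [Pi.add_apply, const_apply, add_comm] using sub_le_iff_le_add.mp this
    exact (hmono hVW).trans (hadd W _ dist_nonneg)
  refine LipschitzWith.of_dist_le_mul fun V W ↦ (dist_pi_le_iff (by positivity)).mpr fun i ↦ ?_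
  have hWV := hle W V i
  rw [dist_comm] at hWV
  exact abs_sub_le_iff.mpr ⟨sub_le_iff_le_add'.mpr (hle V W i), sub_le_iff_le_add'.mpr hWV⟩

theorem sup'_abs_sub_eq_dist {ι : Type*} [Fintype ι] [Nonempty ι] (V W : ι → ℝ) :
    univ.sup' univ_nonempty (fun i ↦ |V i - W i|) = dist V W :=
  le_antisymm (sup'_le _ _ fun i _ ↦ dist_le_pi_dist V W i) <|
    dist_pi_le_iff'.mpr fun i ↦ le_sup' (fun i ↦ |V i - W i|) (mem_univ i)

end FixedPoints

section WorstCaseExpectation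

variable {S : Type*} [Fintype S] {Q : Set (S → ℝ)}

/-- The worst-case expectation `inf_{p ∈ Q} Σ_s p(s) V(s)` of `V` over a set `Q` of distributions.
As an infimum of reals it is `0` when `Q` is empty or the expectations are unbounded below. -/
noncomputable def worstCaseExpectation (Q : Set (S → ℝ)) (V : S → ℝ) : ℝ :=
  ⨅ p : Q, ∑ s, p.1 s * V s

theorem worstCaseExpectation_eq_sInf (Q : Set (S → ℝ)) (V : S → ℝ) :
    worstCaseExpectation Q V = sInf {v : ℝ | ∃ p ∈ Q, v = ∑ s, p s * V s} := by
  unfold worstCaseExpectation iInf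
  congr 1 with v
  simp [eq_comm]

theorem bddBelow_range_expectation (hQ : Q ⊆ stdSimplex ℝ S) (V : S → ℝ) :
    BddBelow (Set.range fun p : Q ↦ ∑ s, p.1 s * V s) := by
  have hcompact : IsCompact ((fun p : S → ℝ ↦ ∑ s, p s * V s) '' stdSimplex ℝ S) :=
    (isCompact_stdSimplex ℝ S).image (by fun_prop)
  refine hcompact.bddBelow.mono ?_
  rintro _ ⟨p, rfl⟩
  exact ⟨p, hQ p.2, rfl⟩

theorem worstCaseExpectation_mono (hQ : Q ⊆ stdSimplex ℝ S) :
    Monotone (worstCaseExpectation Q) := fun V _ hVW ↦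
  ciInf_mono (bddBelow_range_expectation hQ V) fun p ↦
    sum_le_sum fun s _ ↦ mul_le_mul_of_nonneg_left (hVW s) ((hQ p.2).1 s)

theorem worstCaseExpectation_add_const (hne : Q.Nonempty) (hQ : Q ⊆ stdSimplex ℝ S) (V : S → ℝ)
    (c : ℝ) : worstCaseExpectation Q (V + const S c) = worstCaseExpectation Q V + c := by
  have : Nonempty Q := hne.to_subtype
  have hshift (p : Q) : ∑ s, p.1 s * (V + const S c) s = ∑ s, p.1 s * V s + c := by
    simp only [Pi.add_apply, const_apply, mul_add, sum_add_distrib, ← sum_mul, (hQ p.2).2, one_mul]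
  simp only [worstCaseExpectation, hshift, ciInf_add (bddBelow_range_expectation hQ V)]

end WorstCaseExpectation

section RobustMDP

variable {S A : Type*} [Fintype S] (r : S → A → ℝ) (γ : ℝ) (P : S → A → Set (S → ℝ))

/-- The robust action value (`Q`-function) `r(s,a) + γ inf_{p ∈ P(s,a)} Σ_{s'} p(s') V(s')`: the
worst-case return of playing `a` in state `s` and then collecting `V`. -/
noncomputable def robustActionValue (V : S → ℝ) (s : S) (a : A) : ℝ :=
  r s a + γ * worstCaseExpectation (P s a) V

variable [Fintype A]

theorem robustEval_apply (π : S → A → ℝ) (V : S → ℝ) (s : S) :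
    robustEval r γ P π V s = ∑ a, π s a * robustActionValue r γ P V s a := by
  simp only [robustEval, robustActionValue, worstCaseExpectation_eq_sInf]

theorem robustEval_deterministic [DecidableEq A] (π : S → A) (V : S → ℝ) (s : S) :
    robustEval r γ P (fun s a ↦ if a = π s then 1 else 0) V s =
      robustActionValue r γ P V s (π s) := by
  simp [robustEval_apply]

variable [Nonempty A]

theorem robustOpt_apply (V : S → ℝ) (s : S) :
    robustOpt r γ P V s = univ.sup' univ_nonempty (robustActionValue r γ P V s) := by
  unfold robustOpt robustActionValue
  simp only [worstCaseExpectation_eq_sInf]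

theorem robustActionValue_le_robustOpt (V : S → ℝ) (s : S) (a : A) :
    robustActionValue r γ P V s a ≤ robustOpt r γ P V s :=
  robustOpt_apply r γ P V s ▸ le_sup' _ (mem_univ a)

theorem exists_greedy_policy [DecidableEq A] (V : S → ℝ) :
    ∃ π : S → A,
      robustEval r γ P (fun s a ↦ if a = π s then 1 else 0) V = robustOpt r γ P V := by
  choose π _ hπ using fun s ↦ exists_mem_eq_sup' univ_nonempty (robustActionValue r γ P V s)
  exact ⟨π, funext fun s ↦ by rw [robustEval_deterministic, robustOpt_apply, hπ]⟩

theorem robustEval_le_robustOpt {π : S → A → ℝ} (hπ : ∀ s, π s ∈ stdSimplex ℝ A) (V : S → ℝ) :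
    robustEval r γ P π V ≤ robustOpt r γ P V := fun s ↦
  calc robustEval r γ P π V s
      = ∑ a, π s a * robustActionValue r γ P V s a := robustEval_apply r γ P π V s
    _ ≤ ∑ a, π s a * robustOpt r γ P V s := sum_le_sum fun a _ ↦
        mul_le_mul_of_nonneg_left (robustActionValue_le_robustOpt r γ P V s a) ((hπ s).1 a)
    _ = robustOpt r γ P V s := by rw [← sum_mul, (hπ s).2, one_mul]

variable {γ P}

theorem robustOpt_mono (hγ : 0 ≤ γ) (hP : ∀ s a, P s a ⊆ stdSimplex ℝ S) :
    Monotone (robustOpt r γ P) := fun V W hVW s ↦ by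
  simp only [robustOpt_apply]
  refine sup'_mono_fun fun a _ ↦ ?_
  unfold robustActionValue
  gcongr
  exact worstCaseExpectation_mono (hP s a) hVW

theorem robustOpt_add_const (hne : ∀ s a, (P s a).Nonempty)
    (hP : ∀ s a, P s a ⊆ stdSimplex ℝ S) (V : S → ℝ) (c : ℝ) :
    robustOpt r γ P (V + const S c) = robustOpt r γ P V + const S (γ * c) := by
  ext s
  have hshift (a : A) : robustActionValue r γ P (V + const S c) s a =
      robustActionValue r γ P V s a + γ * c := by
    simp only [robustActionValue, worstCaseExpectation_add_const (hne s a) (hP s a), mul_add,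
      add_assoc]
  simp only [Pi.add_apply, const_apply, robustOpt_apply, sup'_add, ← hshift]

theorem contractingWith_robustOpt {γ : ℝ≥0} (hγ : γ < 1) (hne : ∀ s a, (P s a).Nonempty)
    (hP : ∀ s a, P s a ⊆ stdSimplex ℝ S) : ContractingWith γ (robustOpt r γ P) :=
  ⟨hγ, lipschitzWith_of_monotone_of_map_add_const_le (robustOpt_mono r γ.coe_nonneg hP)
    fun V c _ ↦ (robustOpt_add_const r hne hP V c).le⟩

end RobustMDP

theorem robust_optimality_general {S A : Type*} [Fintype S] [Fintype A]
    [Nonempty S] [Nonempty A] [DecidableEq A]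
    (r : S → A → ℝ) (γ : ℝ) (hγ0 : 0 ≤ γ) (hγ1 : γ < 1)
    (P : S → A → Set (S → ℝ))
    (hPne : ∀ s a, (P s a).Nonempty)
    (hPsimplex : ∀ s a, P s a ⊆ stdSimplex ℝ S) :
    (∀ V W : S → ℝ,
      Finset.univ.sup' Finset.univ_nonempty
          (fun s => |robustOpt r γ P V s - robustOpt r γ P W s|) ≤
        γ * Finset.univ.sup' Finset.univ_nonempty (fun s => |V s - W s|)) ∧
    ∃ Vstar : S → ℝ, robustOpt r γ P Vstar = Vstar ∧
      (∀ W : S → ℝ, robustOpt r γ P W = W → W = Vstar) ∧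
      ∃ πstar : S → A,
        robustEval r γ P (fun s a => if a = πstar s then (1 : ℝ) else 0) Vstar = Vstar ∧
        ∀ π : S → A → ℝ, (∀ s a, 0 ≤ π s a) → (∀ s, ∑ a, π s a = 1) →
          ∀ Vπ : S → ℝ, robustEval r γ P π Vπ = Vπ → ∀ s, Vπ s ≤ Vstar s := by
  lift γ to ℝ≥0 using hγ0
  have hcontr : ContractingWith γ (robustOpt r γ P) :=
    contractingWith_robustOpt r hγ1 hPne hPsimplex
  have hfix : robustOpt r γ P (hcontr.fixedPoint _) = hcontr.fixedPoint _ :=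
    hcontr.fixedPoint_isFixedPt
  obtain ⟨πstar, hgreedy⟩ := exists_greedy_policy r γ P (hcontr.fixedPoint _)
  refine ⟨fun V W ↦ ?_, hcontr.fixedPoint _, hfix, fun W hW ↦ hcontr.fixedPoint_unique hW, πstar,
    hgreedy.trans hfix, fun π hπ0 hπ1 Vπ hVπ ↦ ?_⟩
  · simpa only [sup'_abs_sub_eq_dist] using hcontr.toLipschitzWith.dist_le_mul V W
  · have hsub : Vπ ≤ robustOpt r γ P Vπ :=
      hVπ.ge.trans (robustEval_le_robustOpt r γ P (fun s ↦ ⟨hπ0 s, hπ1 s⟩) Vπ)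
    exact le_contractingWith_fixedPoint hcontr (robustOpt_mono r γ.coe_nonneg hPsimplex) hsub

/-- under nonempty compact uncertainty sets, the robust optimality
operator is a γ-contraction with unique fixed point `V*`, and there is a
deterministic stationary policy `π*` whose robust value is `V*` and which
dominates every stationary (possibly randomized) policy. -/
theorem robust_optimality {S A : Type*} [Fintype S] [Fintype A]
    [Nonempty S] [Nonempty A] [DecidableEq A]
    (r : S → A → ℝ) (γ : ℝ) (hγ0 : 0 < γ) (hγ1 : γ < 1)
    (P : S → A → Set (S → ℝ))
    (hPne : ∀ s a, (P s a).Nonempty)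
    (hPcompact : ∀ s a, IsCompact (P s a))
    (hPsimplex : ∀ s a, ∀ p ∈ P s a, (∀ s', 0 ≤ p s') ∧ (∑ s', p s' = 1)) :
    (∀ V W : S → ℝ,
      Finset.univ.sup' Finset.univ_nonempty
          (fun s => |robustOpt r γ P V s - robustOpt r γ P W s|) ≤
        γ * Finset.univ.sup' Finset.univ_nonempty (fun s => |V s - W s|)) ∧
    ∃ Vstar : S → ℝ, robustOpt r γ P Vstar = Vstar ∧
      (∀ W : S → ℝ, robustOpt r γ P W = W → W = Vstar) ∧
      ∃ πstar : S → A,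
        robustEval r γ P (fun s a => if a = πstar s then (1 : ℝ) else 0) Vstar = Vstar ∧
        ∀ π : S → A → ℝ, (∀ s a, 0 ≤ π s a) → (∀ s, ∑ a, π s a = 1) →
          ∀ Vπ : S → ℝ, robustEval r γ P π Vπ = Vπ → ∀ s, Vπ s ≤ Vstar s :=
  robust_optimality_general r γ hγ0.le hγ1 P hPne hPsimplex
end

section
/- Let K ≥ 1, let ρ ∈ Δ_{[K]} satisfy ρ(k) > 0 for all k, let h : [K] → ℝ, and let κ > 0. Then min { Σ_k w(k) h(k) : w ∈ Δ_{[K]}, D(w‖ρ) ≤ κ } = sup_{β > 0} ( −(1/β)·log( Σ_k ρ(k)·e^{−β·h(k)} ) − κ/β ). Moreover, if β* > 0 satisfies D(w_{β*}‖ρ) = κ, where w_β(k) = ρ(k)·e^{−β·h(k)} / Σ_j ρ(j)·e^{−β·h(j)}, then w_{β*} attains the minimum on the left-hand side. -/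
/-- Boltzmann weights `w_β(k) = ρ(k) e^{−β h(k)} / Σ_j ρ(j) e^{−β h(j)}`. -/
noncomputable def boltzmannW {K : ℕ} (ρ h : Fin K → ℝ) (β : ℝ) : Fin K → ℝ :=
  fun k => ρ k * Real.exp (-β * h k) / ∑ j, ρ j * Real.exp (-β * h j)

/-!
For every probability vector `w` and every `β ≠ 0`, with `g β` the dual function,
`⟨w, h⟩ = g β + (D(w‖w_β) + (κ - D(w‖ρ))) / β`.
When `w` is feasible and `β > 0` the last term is nonnegative, which is weak duality. At `w = w_β`
the term is `(κ - D(w_β‖ρ)) / β`, so strong duality only needs feasible `w_β` with small slack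
compared to `β`: given `ε > 0`, either `w_β` is feasible at `β = κ / ε`, and its slack is at most
`κ = ε β`, or the constraint is violated there and, since `D(w_0‖ρ) = 0`, it is tight at some
smaller `β > 0` by the intermediate value theorem.
-/

section FiniteType

variable {ι : Type*} [Fintype ι]

/-- The Kullback–Leibler divergence `D(p‖q)` of real vectors on a finite type, to be used with
`q k > 0`: a term with `q k = 0` is `0` rather than `∞`. -/
noncomputable def klDivergence (p q : ι → ℝ) : ℝ :=
  ∑ k, p k * Real.log (p k / q k)

theorem klDivergence_nonneg {p q : ι → ℝ} (hp : ∀ k, 0 ≤ p k) (hq : ∀ k, 0 < q k)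
    (hpq : ∑ k, q k ≤ ∑ k, p k) : 0 ≤ klDivergence p q := by
  have hterm (k : ι) : q k * InformationTheory.klFun (p k / q k) =
      p k * Real.log (p k / q k) + (q k - p k) := by
    have := (hq k).ne'
    rw [InformationTheory.klFun]
    field_simp
    ring
  have hsum : 0 ≤ ∑ k, q k * InformationTheory.klFun (p k / q k) :=
    Finset.sum_nonneg fun k _ =>
      mul_nonneg (hq k).le (InformationTheory.klFun_nonneg (div_nonneg (hp k) (hq k).le))
  simp only [hterm, Finset.sum_add_distrib, Finset.sum_sub_distrib] at hsum
  unfold klDivergence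
  linarith

theorem klDivergence_self (p : ι → ℝ) : klDivergence p p = 0 :=
  Finset.sum_eq_zero fun k _ => by
    rcases eq_or_ne (p k) 0 with hk | hk <;> simp [hk]

theorem continuous_klDivergence_left {q : ι → ℝ} (hq : ∀ k, q k ≠ 0) :
    Continuous fun p => klDivergence p q := by
  have hterm (p : ι → ℝ) (k : ι) : p k * Real.log (p k / q k) =
      q k * (p k / q k * Real.log (p k / q k)) := by
    rw [← mul_assoc, mul_div_cancel₀ _ (hq k)]
  simp only [klDivergence, hterm]
  exact continuous_finsetSum _ fun k _ => continuous_const.mul <|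
    Real.continuous_mul_log.comp ((continuous_apply k).div_const _)

/-- The partition function `Z(β) = Σ_k ρ(k) e^{-β h(k)}`. -/
noncomputable def partitionFunction (ρ h : ι → ℝ) (β : ℝ) : ℝ :=
  ∑ k, ρ k * Real.exp (-β * h k)

/-- The Boltzmann weights `w_β` on an arbitrary finite type; `boltzmannW` is the case `Fin K`. -/
noncomputable def boltzmannWeights (ρ h : ι → ℝ) (β : ℝ) : ι → ℝ :=
  fun k => ρ k * Real.exp (-β * h k) / partitionFunction ρ h β

/-- The Lagrange dual function of minimizing `⟨w, h⟩` under `D(w‖ρ) ≤ κ`, parametrized by the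
inverse `β` of the multiplier of the constraint. -/
noncomputable def klDual (ρ h : ι → ℝ) (κ β : ℝ) : ℝ :=
  -(1 / β) * Real.log (partitionFunction ρ h β) - κ / β

/-- The values `⟨w, h⟩` over the probability vectors `w` with `D(w‖ρ) ≤ κ`. -/
def klConstrainedMeans (ρ h : ι → ℝ) (κ : ℝ) : Set ℝ :=
  {v | ∃ w : ι → ℝ, (∀ k, 0 ≤ w k) ∧ ∑ k, w k = 1 ∧ klDivergence w ρ ≤ κ ∧ v = w ⬝ᵥ h}

theorem boltzmannWeights_zero {ρ : ι → ℝ} (hρsum : ∑ k, ρ k = 1) (h : ι → ℝ) :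
    boltzmannWeights ρ h 0 = ρ := by
  ext k
  simp [boltzmannWeights, partitionFunction, hρsum]

theorem isCompact_klConstrainedMeans {ρ : ι → ℝ} (hρ : ∀ k, ρ k ≠ 0) (h : ι → ℝ) (κ : ℝ) :
    IsCompact (klConstrainedMeans ρ h κ) := by
  have himage : klConstrainedMeans ρ h κ =
      (· ⬝ᵥ h) '' (stdSimplex ℝ ι ∩ {w | klDivergence w ρ ≤ κ}) := by
    ext v
    simp [klConstrainedMeans, stdSimplex, and_assoc, eq_comm]
  rw [himage]
  exact ((isCompact_stdSimplex ℝ ι).inter_right <|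
    isClosed_le (continuous_klDivergence_left hρ) continuous_const).image (by fun_prop)

theorem klConstrainedMeans_nonempty {ρ : ι → ℝ} (hρ : ∀ k, 0 ≤ ρ k) (hρsum : ∑ k, ρ k = 1)
    (h : ι → ℝ) {κ : ℝ} (hκ : 0 ≤ κ) : (klConstrainedMeans ρ h κ).Nonempty :=
  ⟨ρ ⬝ᵥ h, ρ, hρ, hρsum, (klDivergence_self ρ).trans_le hκ, rfl⟩

section Nonempty

variable [Nonempty ι] {ρ : ι → ℝ}

theorem partitionFunction_pos (hρ : ∀ k, 0 < ρ k) (h : ι → ℝ) (β : ℝ) :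
    0 < partitionFunction ρ h β :=
  Finset.sum_pos (fun k _ => mul_pos (hρ k) (Real.exp_pos _)) Finset.univ_nonempty

theorem boltzmannWeights_pos (hρ : ∀ k, 0 < ρ k) (h : ι → ℝ) (β : ℝ) (k : ι) :
    0 < boltzmannWeights ρ h β k :=
  div_pos (mul_pos (hρ k) (Real.exp_pos _)) (partitionFunction_pos hρ h β)

theorem sum_boltzmannWeights (hρ : ∀ k, 0 < ρ k) (h : ι → ℝ) (β : ℝ) :
    ∑ k, boltzmannWeights ρ h β k = 1 := by
  simp only [boltzmannWeights, ← Finset.sum_div]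
  exact div_self (partitionFunction_pos hρ h β).ne'

theorem continuous_boltzmannWeights (hρ : ∀ k, 0 < ρ k) (h : ι → ℝ) :
    Continuous (boltzmannWeights ρ h) := by
  have hZ : Continuous (partitionFunction ρ h) := by
    unfold partitionFunction
    fun_prop
  exact continuous_pi fun k =>
    Continuous.div (by fun_prop) hZ fun β => (partitionFunction_pos hρ h β).ne'

theorem dotProduct_boltzmannWeights_mem_klConstrainedMeans (hρ : ∀ k, 0 < ρ k) (h : ι → ℝ)
    {κ β : ℝ} (hβ : klDivergence (boltzmannWeights ρ h β) ρ ≤ κ) :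
    boltzmannWeights ρ h β ⬝ᵥ h ∈ klConstrainedMeans ρ h κ :=
  ⟨_, fun k => (boltzmannWeights_pos hρ h β k).le, sum_boltzmannWeights hρ h β, hβ, rfl⟩

theorem klDivergence_boltzmannWeights_right (hρ : ∀ k, 0 < ρ k) (h : ι → ℝ) (β : ℝ) {w : ι → ℝ}
    (hw : ∑ k, w k = 1) :
    klDivergence w (boltzmannWeights ρ h β) =
      klDivergence w ρ + β * w ⬝ᵥ h + Real.log (partitionFunction ρ h β) := by
  have hterm (k : ι) : w k * Real.log (w k / boltzmannWeights ρ h β k) =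
      w k * Real.log (w k / ρ k) + β * (w k * h k) +
        w k * Real.log (partitionFunction ρ h β) := by
    rcases eq_or_ne (w k) 0 with hk | hk
    · simp [hk]
    · have hnum : ρ k * Real.exp (-β * h k) ≠ 0 := (mul_pos (hρ k) (Real.exp_pos _)).ne'
      rw [Real.log_div hk (boltzmannWeights_pos hρ h β k).ne', Real.log_div hk (hρ k).ne',
        boltzmannWeights, Real.log_div hnum (partitionFunction_pos hρ h β).ne',
        Real.log_mul (hρ k).ne' (Real.exp_pos _).ne', Real.log_exp]
      ring
  simp only [klDivergence, hterm, Finset.sum_add_distrib, ← Finset.mul_sum, ← Finset.sum_mul, hw,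
    one_mul, dotProduct]

theorem dotProduct_eq_klDual_add (hρ : ∀ k, 0 < ρ k) (h : ι → ℝ) (κ : ℝ) {β : ℝ} (hβ : β ≠ 0)
    {w : ι → ℝ} (hw : ∑ k, w k = 1) :
    w ⬝ᵥ h = klDual ρ h κ β +
      (klDivergence w (boltzmannWeights ρ h β) + (κ - klDivergence w ρ)) / β := by
  rw [klDivergence_boltzmannWeights_right hρ h β hw, klDual]
  field_simp
  ring

theorem dotProduct_boltzmannWeights (hρ : ∀ k, 0 < ρ k) (h : ι → ℝ) (κ : ℝ) {β : ℝ}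
    (hβ : β ≠ 0) :
    boltzmannWeights ρ h β ⬝ᵥ h =
      klDual ρ h κ β + (κ - klDivergence (boltzmannWeights ρ h β) ρ) / β := by
  rw [dotProduct_eq_klDual_add hρ h κ hβ (sum_boltzmannWeights hρ h β), klDivergence_self,
    zero_add]

theorem klDual_mem_lowerBounds (hρ : ∀ k, 0 < ρ k) (h : ι → ℝ) (κ : ℝ) {β : ℝ} (hβ : 0 < β) :
    klDual ρ h κ β ∈ lowerBounds (klConstrainedMeans ρ h κ) := by
  rintro _ ⟨w, hw, hwsum, hwκ, rfl⟩
  have hD : 0 ≤ klDivergence w (boltzmannWeights ρ h β) :=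
    klDivergence_nonneg hw (boltzmannWeights_pos hρ h β)
      (by rw [sum_boltzmannWeights hρ, hwsum])
  rw [dotProduct_eq_klDual_add hρ h κ hβ.ne' hwsum]
  exact le_add_of_nonneg_right (div_nonneg (add_nonneg hD (sub_nonneg.2 hwκ)) hβ.le)

theorem isLeast_dotProduct_boltzmannWeights (hρ : ∀ k, 0 < ρ k) (h : ι → ℝ) {κ β : ℝ}
    (hβ : 0 < β) (hβκ : klDivergence (boltzmannWeights ρ h β) ρ = κ) :
    IsLeast (klConstrainedMeans ρ h κ) (boltzmannWeights ρ h β ⬝ᵥ h) := by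
  refine ⟨dotProduct_boltzmannWeights_mem_klConstrainedMeans hρ h hβκ.le, ?_⟩
  rw [dotProduct_boltzmannWeights hρ h κ hβ.ne', hβκ, sub_self, zero_div, add_zero]
  exact klDual_mem_lowerBounds hρ h κ hβ

theorem exists_klDivergence_boltzmannWeights_eq (hρ : ∀ k, 0 < ρ k) (hρsum : ∑ k, ρ k = 1)
    (h : ι → ℝ) {κ b : ℝ} (hκ : 0 < κ) (hb : 0 ≤ b)
    (hbκ : κ ≤ klDivergence (boltzmannWeights ρ h b) ρ) :
    ∃ β, 0 < β ∧ klDivergence (boltzmannWeights ρ h β) ρ = κ := by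
  have hcont : Continuous fun β => klDivergence (boltzmannWeights ρ h β) ρ :=
    (continuous_klDivergence_left fun k => (hρ k).ne').comp (continuous_boltzmannWeights hρ h)
  have hzero : klDivergence (boltzmannWeights ρ h 0) ρ = 0 := by
    rw [boltzmannWeights_zero hρsum, klDivergence_self]
  obtain ⟨β, hβ, hβκ⟩ := intermediate_value_Icc hb hcont.continuousOn
    ⟨hzero.trans_le hκ.le, hbκ⟩
  refine ⟨β, hβ.1.lt_of_ne ?_, hβκ⟩
  rintro rfl
  exact hκ.ne (hzero.symm.trans hβκ)

theorem exists_klDivergence_boltzmannWeights_slack_le (hρ : ∀ k, 0 < ρ k)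
    (hρsum : ∑ k, ρ k = 1) (h : ι → ℝ) {κ ε : ℝ} (hκ : 0 < κ) (hε : 0 < ε) :
    ∃ β, 0 < β ∧ klDivergence (boltzmannWeights ρ h β) ρ ≤ κ ∧
      κ - klDivergence (boltzmannWeights ρ h β) ρ ≤ ε * β := by
  have hb : 0 < κ / ε := div_pos hκ hε
  rcases le_total (klDivergence (boltzmannWeights ρ h (κ / ε)) ρ) κ with hle | hge
  · have hD : 0 ≤ klDivergence (boltzmannWeights ρ h (κ / ε)) ρ :=
      klDivergence_nonneg (fun k => (boltzmannWeights_pos hρ h _ k).le) hρ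
        (by rw [sum_boltzmannWeights hρ, hρsum])
    exact ⟨κ / ε, hb, hle, by rwa [mul_div_cancel₀ _ hε.ne', sub_le_self_iff]⟩
  · obtain ⟨β, hβ, hβκ⟩ :=
      exists_klDivergence_boltzmannWeights_eq hρ hρsum h hκ hb.le hge
    exact ⟨β, hβ, hβκ.le, by rw [hβκ, sub_self]; positivity⟩

theorem isLUB_klDual (hρ : ∀ k, 0 < ρ k) (hρsum : ∑ k, ρ k = 1) (h : ι → ℝ) {κ m : ℝ}
    (hκ : 0 < κ) (hm : IsGLB (klConstrainedMeans ρ h κ) m) :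
    IsLUB {v | ∃ β, 0 < β ∧ v = klDual ρ h κ β} m := by
  constructor
  · rintro _ ⟨β, hβ, rfl⟩
    exact hm.2 (klDual_mem_lowerBounds hρ h κ hβ)
  · refine fun b hb => le_of_forall_pos_le_add fun ε hε => ?_
    obtain ⟨β, hβ, hfeasible, hslack⟩ :=
      exists_klDivergence_boltzmannWeights_slack_le hρ hρsum h hκ hε
    calc
      m ≤ boltzmannWeights ρ h β ⬝ᵥ h :=
        hm.1 (dotProduct_boltzmannWeights_mem_klConstrainedMeans hρ h hfeasible)
      _ = klDual ρ h κ β + (κ - klDivergence (boltzmannWeights ρ h β) ρ) / β :=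
        dotProduct_boltzmannWeights hρ h κ hβ.ne'
      _ ≤ b + ε := add_le_add (hb ⟨β, hβ, rfl⟩) ((div_le_iff₀ hβ).2 hslack)

end Nonempty

theorem boltzmann_reweighting_dual_general {ρ : ι → ℝ} (hρ : ∀ k, 0 < ρ k)
    (hρsum : ∑ k, ρ k = 1) (h : ι → ℝ) {κ : ℝ} (hκ : 0 < κ) :
    (∃ m, IsLeast (klConstrainedMeans ρ h κ) m ∧
      IsLUB {v | ∃ β, 0 < β ∧ v = klDual ρ h κ β} m) ∧
    ∀ β, 0 < β → klDivergence (boltzmannWeights ρ h β) ρ = κ →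
      IsLeast (klConstrainedMeans ρ h κ) (boltzmannWeights ρ h β ⬝ᵥ h) := by
  have : Nonempty ι :=
    Finset.univ_nonempty_iff.1 (Finset.nonempty_of_sum_ne_zero (hρsum.trans_ne one_ne_zero))
  obtain ⟨m, hm⟩ := (isCompact_klConstrainedMeans (fun k => (hρ k).ne') h κ).exists_isLeast
    (klConstrainedMeans_nonempty (fun k => (hρ k).le) hρsum h hκ.le)
  exact ⟨⟨m, hm, isLUB_klDual hρ hρsum h hκ hm.isGLB⟩,
    fun _ => isLeast_dotProduct_boltzmannWeights hρ h⟩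

end FiniteType

/-- KL-constrained Boltzmann reweighting duality:
`min { Σ_k w(k) h(k) : w ∈ Δ_K, D(w‖ρ) ≤ κ }
  = sup_{β>0} ( −(1/β) log Σ_k ρ(k) e^{−β h(k)} − κ/β )`,
and any `β* > 0` with `D(w_{β*}‖ρ) = κ` yields a minimizer `w_{β*}`. -/
theorem boltzmann_reweighting_dual {K : ℕ} (hK : 1 ≤ K)
    (ρ : Fin K → ℝ) (hρpos : ∀ k, 0 < ρ k) (hρsum : ∑ k, ρ k = 1)
    (h : Fin K → ℝ) (κ : ℝ) (hκ : 0 < κ) :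
    (sInf {v : ℝ | ∃ w : Fin K → ℝ, (∀ k, 0 ≤ w k) ∧ (∑ k, w k = 1) ∧
        (∑ k, w k * Real.log (w k / ρ k)) ≤ κ ∧ v = ∑ k, w k * h k} =
      sSup {v : ℝ | ∃ β : ℝ, 0 < β ∧
        v = -(1 / β) * Real.log (∑ k, ρ k * Real.exp (-β * h k)) - κ / β}) ∧
    (∀ βstar : ℝ, 0 < βstar →
      (∑ k, boltzmannW ρ h βstar k * Real.log (boltzmannW ρ h βstar k / ρ k)) = κ →
      (∑ k, boltzmannW ρ h βstar k * h k) =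
        sInf {v : ℝ | ∃ w : Fin K → ℝ, (∀ k, 0 ≤ w k) ∧ (∑ k, w k = 1) ∧
          (∑ k, w k * Real.log (w k / ρ k)) ≤ κ ∧ v = ∑ k, w k * h k}) := by
  obtain ⟨⟨m, hleast, hlub⟩, htight⟩ := boltzmann_reweighting_dual_general hρpos hρsum h hκ
  exact ⟨hleast.csInf_eq.trans (hlub.csSup_eq ⟨_, 1, one_pos, rfl⟩).symm,
    fun β hβ hβκ => (htight β hβ hβκ).csInf_eq.symm⟩
end
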